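/- arXiv:1401.5817 — 5 statements merged into one kernel-verified Lean document; each statement's English description precedes it below -/
import Mathlib

section
/- Let X = {X(t) : t ∈ T} and Y = {Y(t) : t ∈ T} be independent and identically distributed stochastic processes on (Ω,F,P), all of whose sample paths lie in M(T). If h ∈ M(T) and there exists a subset S of the countable set T₀ such that P( X(t) − Y(t) ≤ 0 for all t ∈ S ) = 0, then the half-region depth D(h,P) = 0. -/
/-!
The events `X ⪯ h` and `X ⪰ h` only grow when the inequality is required on the countable set
`S` alone, where they become preimages of measurable sets `A`, `B` of paths. If `X ∈ A` and
`Y ∈ B`, then `X ≤ h ≤ Y` on `S`, so by independence and identical distribution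
`P (X ∈ A) * P (X ∈ B) = P (X ∈ A, Y ∈ B) ≤ P (X - Y ≤ 0 on S) = 0`,
and one of the two factors vanishes.
-/

open MeasureTheory ProbabilityTheory
open scoped ENNReal

/-- **Proposition 2 (difference depth).**  Let `T` be an index set with a fixed countable
subset `T₀`, and let `M` be a linear subspace of real-valued functions on `T` containing
the constants such that every `f ∈ M` is bounded above with
`sup_{t ∈ T} f t = sup_{t ∈ T₀} f t`.  Let `X` and `Y` be i.i.d. stochastic processes on
`(Ω, F, P)` with all sample paths in `M`.  If `h ∈ M` and there is a subset `S ⊆ T₀` with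
`P( X t - Y t ≤ 0 for all t ∈ S ) = 0`, then the half-region depth
`D(h,P) = min( P(X ⪰ h), P(X ⪯ h) )` is zero. -/
theorem halfRegionDepth_eq_zero_of_difference
    {T Ω : Type*} [MeasurableSpace Ω] (P : Measure Ω) [IsProbabilityMeasure P]
    (T₀ : Set T) (hT₀ : T₀.Countable)
    (M : Submodule ℝ (T → ℝ))
    (hconst : ∀ c : ℝ, (fun _ : T => c) ∈ M)
    (hsupM : ∀ f ∈ M, BddAbove (Set.range f) ∧ sSup (Set.range f) = sSup (f '' T₀))
    (X Y : Ω → T → ℝ)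
    (hXpaths : ∀ ω, X ω ∈ M) (hYpaths : ∀ ω, Y ω ∈ M)
    (hXmeas : Measurable X) (hYmeas : Measurable Y)
    (hindep : IndepFun X Y P)
    (hident : P.map X = P.map Y)
    (h : T → ℝ) (hh : h ∈ M)
    (S : Set T) (hS : S ⊆ T₀)
    (hzero : P {ω | ∀ t ∈ S, X ω t - Y ω t ≤ 0} = 0) :
    min (P {ω | ∀ t, h t ≤ X ω t}) (P {ω | ∀ t, X ω t ≤ h t}) = 0 := by
  have hSc : S.Countable := hT₀.mono hS
  set A : Set (T → ℝ) := {f | ∀ t ∈ S, f t ≤ h t} with hA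
  set B : Set (T → ℝ) := {f | ∀ t ∈ S, h t ≤ f t} with hB
  have hAm : MeasurableSet A := by
    have hA' : A = ⋂ t ∈ S, {f : T → ℝ | f t ≤ h t} := by ext f; simp [hA]
    rw [hA']
    exact MeasurableSet.biInter hSc fun t _ =>
      measurableSet_le (measurable_pi_apply t) measurable_const
  have hBm : MeasurableSet B := by
    have hB' : B = ⋂ t ∈ S, {f : T → ℝ | h t ≤ f t} := by ext f; simp [hB]
    rw [hB']
    exact MeasurableSet.biInter hSc fun t _ =>
      measurableSet_le measurable_const (measurable_pi_apply t)
  have hYB : P (Y ⁻¹' B) = P (X ⁻¹' B) := by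
    rw [← Measure.map_apply hYmeas hBm, ← hident, Measure.map_apply hXmeas hBm]
  have hprod : P (X ⁻¹' A) * P (X ⁻¹' B) = 0 := by
    rw [← hYB, ← hindep.measure_inter_preimage_eq_mul A B hAm hBm]
    refine measure_mono_null ?_ hzero
    rintro ω ⟨hXA, hYB'⟩ t ht
    exact sub_nonpos.2 ((hXA t ht).trans (hYB' t ht))
  rcases mul_eq_zero.1 hprod with h0 | h0
  · have hle : P {ω | ∀ t, X ω t ≤ h t} = 0 :=
      measure_mono_null (t := X ⁻¹' A) (fun ω hω t _ => hω t) h0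
    rw [hle]
    exact min_eq_right (zero_le)
  · have hge : P {ω | ∀ t, h t ≤ X ω t} = 0 :=
      measure_mono_null (t := X ⁻¹' B) (fun ω hω t _ => hω t) h0
    rw [hge]
    exact min_eq_left (zero_le)
end

section
/- Let X = {X(t) : t = (t₁,t₂) ∈ [0,1]×[0,1]} be a stochastic process on (Ω,F,P) with continuous sample paths on T = [0,1]×[0,1] which is a centered Gaussian process (every finite real linear combination ∑ᵢ cᵢ X(tⁱ) has a centered Gaussian distribution) with covariance E(X(t₁,t₂)X(s₁,s₂)) = min{s₁,t₁}·min{s₂,t₂}, i.e., X is a Brownian sheet. Then for every continuous function h on T the half-region depth D(h,P) = min( P(X(t) ≥ h(t) for all t ∈ T), P(X(t) ≤ h(t) for all t ∈ T) ) equals 0. -/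
/-!
The process `X` vanishes at the origin and, read along the diagonal at rapidly decreasing times, it
behaves like a sequence of independent centered Gaussian variables. Write `Y k` for these sampled
values and `u k` for their variances, with `u (k + 1) / u k` tending to zero at least
geometrically. Then the increments `Y k - Y (k + 1)` are independent,
each lies below minus its standard deviation with the same positive probability, and `Y (k + 1)` is
negligible with respect to `Y k - Y (k + 1)`. The two Borel-Cantelli lemmas then show that almost
surely `Y k < 0` for infinitely many `k`
(`ProbabilityTheory.IsGaussianProcess.measure_forall_nonneg_eq_zero`).

Whatever the function `h`, along a fixed such sequence of diagonal points either `0 ≤ h` infinitely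
often or `h ≤ 0` infinitely often. In the first case `h ≤ X` forces `X` to be nonnegative along a
subsequence, in the second case `X ≤ h` forces `-X` to be; both are null events.
-/

open MeasureTheory ProbabilityTheory
open scoped ENNReal NNReal
open Filter

/-- If every finite linear combination of real variables is a centered Gaussian, the variables form
a Gaussian process. -/
lemma isGaussianProcess_of_linearCombination
    {Ω : Type*} [MeasurableSpace Ω] {P : Measure Ω} {Y : ℕ → Ω → ℝ}
    (hYm : ∀ n, Measurable (Y n))
    (hG : ∀ (n : ℕ) (c : Fin n → ℝ) (p : Fin n → ℕ),
      ∃ v : ℝ≥0, P.map (fun ω => ∑ i, c i * Y (p i) ω) = gaussianReal 0 v) :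
    IsGaussianProcess Y P := by
  refine ⟨fun I => ⟨isGaussian_of_map_eq_gaussianReal fun L => ?_⟩⟩
  let e := I.equivFin.symm
  obtain ⟨v, hv⟩ := hG I.card
    (fun i => L fun j => if e i = j then 1 else 0) (fun i => (e i : ℕ))
  refine ⟨0, v, ?_⟩
  have hm : Measurable fun ω => I.restrict (Y · ω) := measurable_pi_lambda _ fun i => hYm i
  rw [Measure.map_map (by fun_prop) hm, ← hv]
  congr 1
  ext ω
  simp only [Function.comp_apply]
  have h1 := LinearMap.pi_apply_eq_sum_univ (L : (I → ℝ) →ₗ[ℝ] ℝ) (I.restrict (Y · ω))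
  simp only [ContinuousLinearMap.coe_coe] at h1
  rw [h1, ← e.sum_comp]
  simp [mul_comm]

/-- A centered Gaussian variable is below minus its standard deviation with a probability that does
not depend on its variance. -/
lemma gaussianReal_Iic_neg_sqrt {v : ℝ≥0} (hv : v ≠ 0) :
    gaussianReal 0 v (Set.Iic (-√(v : ℝ))) = gaussianReal 0 1 (Set.Iic (-1)) := by
  have hpos : 0 < √(v : ℝ) := Real.sqrt_pos.2 (by positivity)
  have h1 : gaussianReal 0 v = (gaussianReal 0 1).map (√(v : ℝ) * ·) := by
    rw [gaussianReal_map_const_mul]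
    congr 1
    · simp
    · ext
      simp
  rw [h1, Measure.map_apply (by fun_prop) measurableSet_Iic]
  congr 1
  ext x
  simp only [Set.mem_preimage, Set.mem_Iic]
  constructor <;> intro h <;> nlinarith

lemma gaussianReal_Iic_neg_one_ne_zero : gaussianReal 0 1 (Set.Iic (-1)) ≠ 0 := by
  intro h
  have h2 := gaussianReal_absolutelyContinuous' 0 (one_ne_zero : (1 : ℝ≥0) ≠ 0) h
  simp at h2

/-- A centered Gaussian sequence with the covariance of a Brownian motion sampled at times `u k`
that decrease to zero fast enough is almost surely negative at some index. -/
lemma ProbabilityTheory.IsGaussianProcess.measure_forall_nonneg_eq_zero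
    {Ω : Type*} [MeasurableSpace Ω] {P : Measure Ω} [IsProbabilityMeasure P] {Y : ℕ → Ω → ℝ}
    (hY : IsGaussianProcess Y P) (hYm : ∀ n, Measurable (Y n)) (hY0 : ∀ n, ∫ ω, Y n ω ∂P = 0)
    {u : ℕ → ℝ} (hu : ∀ n, 0 < u n) (hdec : ∀ n, u (n + 1) ≤ u n * (1 / 4) ^ (n + 1))
    (hcov : ∀ i j, i ≤ j → ∫ ω, Y i ω * Y j ω ∂P = u j) :
    P {ω | ∀ n, 0 ≤ Y n ω} = 0 := by
  have hL2 : ∀ n, MemLp (Y n) 2 P := fun n => (hY.hasGaussianLaw_eval n).memLp_two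
  have hc : ∀ i j, i ≤ j → cov[Y i, Y j; P] = u j := by
    intro i j hij
    rw [covariance_eq_sub (hL2 i) (hL2 j), hY0, hY0]
    simpa using hcov i j hij
  have hvar : ∀ n, Var[Y n; P] = u n := fun n => by
    rw [← covariance_self (hYm n).aemeasurable, hc n n le_rfl]
  set D : ℕ → Ω → ℝ := fun n ω => Y n ω - Y (n + 1) ω with hD
  set d : ℕ → ℝ := fun n => u n - u (n + 1) with hd
  have hpow : ∀ n : ℕ, ((1 : ℝ) / 4) ^ (n + 1) ≤ 1 / 4 := fun n => by
    rw [pow_succ]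
    have : ((1 : ℝ) / 4) ^ n ≤ 1 := pow_le_one₀ (by norm_num) (by norm_num)
    linarith
  have hdu : ∀ n, 3 / 4 * u n ≤ d n := fun n => by
    have := hdec n
    have h2 := mul_le_mul_of_nonneg_left (hpow n) (hu n).le
    simp only [hd]
    linarith
  have hdpos : ∀ n, 0 < d n := fun n => lt_of_lt_of_le (by have := hu n; positivity) (hdu n)
  have hDm : ∀ n, Measurable (D n) := fun n => (hYm n).sub (hYm (n + 1))
  have hDG : IsGaussianProcess D P := by
    refine hY.of_isGaussianProcess fun n => ⟨{n, n + 1},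
      ContinuousLinearMap.proj ⟨n, by simp⟩ - ContinuousLinearMap.proj ⟨n + 1, by simp⟩, ?_⟩
    intro ω
    simp [hD]
  have hDL2 : ∀ n, MemLp (fun ω => Y n ω - Y (n + 1) ω) 2 P := fun n => (hL2 n).sub (hL2 (n + 1))
  have hDcov : ∀ i j, i < j → cov[D i, D j; P] = 0 := by
    intro i j hij
    have hij' : i ≤ j := hij.le
    simp only [hD]
    rw [covariance_fun_sub_left (hL2 _) (hL2 _) (hDL2 _),
      covariance_fun_sub_right (hL2 _) (hL2 _) (hL2 _),
      covariance_fun_sub_right (hL2 _) (hL2 _) (hL2 _),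
      hc _ _ hij', hc _ _ (by omega), hc _ _ (by omega), hc _ _ (by omega)]
    ring
  have hDvar : ∀ n, Var[D n; P] = d n := by
    intro n
    rw [← covariance_self (hDm n).aemeasurable]
    simp only [hD]
    rw [covariance_fun_sub_left (hL2 _) (hL2 _) (hDL2 _),
      covariance_fun_sub_right (hL2 _) (hL2 _) (hL2 _),
      covariance_fun_sub_right (hL2 _) (hL2 _) (hL2 _), covariance_comm (Y (n + 1)) (Y n),
      hc _ _ le_rfl, hc _ _ (by omega), hc _ _ le_rfl]
    ring
  have hDmean : ∀ n, ∫ ω, D n ω ∂P = 0 := by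
    intro n
    simp only [hD]
    rw [integral_sub ((hL2 _).integrable (by norm_num)) ((hL2 _).integrable (by norm_num)),
      hY0, hY0, sub_zero]
  have hDind : iIndepFun D P := by
    rw [iIndepFun_iff_finset]
    intro I
    refine (hDG.hasGaussianLaw I).iIndepFun_of_covariance_eq_zero fun i j hij => ?_
    rcases lt_or_gt_of_ne (Subtype.coe_injective.ne hij) with h | h
    · exact hDcov _ _ h
    · rw [covariance_comm]
      exact hDcov _ _ h
  set S : ℕ → Set Ω := fun n => D n ⁻¹' Set.Iic (-√(d n)) with hS
  have hSm : ∀ n, MeasurableSet (S n) := fun n => hDm n measurableSet_Iic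
  have hSP : ∀ n, P (S n) = gaussianReal 0 1 (Set.Iic (-1)) := by
    intro n
    have h1 := (hDG.hasGaussianLaw_eval n).map_eq_gaussianReal
    rw [hDmean, hDvar] at h1
    rw [hS, ← Measure.map_apply (hDm n) measurableSet_Iic, h1]
    have h2 := gaussianReal_Iic_neg_sqrt (v := (d n).toNNReal) (by simpa using hdpos n)
    rwa [Real.coe_toNNReal _ (hdpos n).le] at h2
  have hSind : iIndepSet S P := by
    rw [iIndepSet_iff_meas_biInter hSm]
    intro I
    exact hDind.measure_inter_preimage_eq_mul I fun i _ => measurableSet_Iic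
  -- Second Borel-Cantelli lemma: infinitely many increments are very negative.
  have hBC2 : ∀ᵐ ω ∂P, ∃ᶠ n in atTop, ω ∈ S n := by
    have h1 := measure_limsup_eq_one hSm hSind (by
      simp_rw [hSP]
      exact ENNReal.tsum_const_eq_top_of_ne_zero gaussianReal_Iic_neg_one_ne_zero)
    have h2 := (prob_compl_eq_zero_iff (MeasurableSet.measurableSet_limsup hSm)).2 h1
    filter_upwards [compl_mem_ae_iff.2 h2] with ω hω
    simpa [mem_limsup_iff_frequently_mem] using hω
  -- First Borel-Cantelli lemma: the remainder `Y (n + 1)` is eventually too small to compensate.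
  have hBC1 : ∀ᵐ ω ∂P, ∀ᶠ n in atTop, ω ∉ {ω | √(d n) ≤ |Y (n + 1) ω|} := by
    apply ae_eventually_notMem
    have hb : ∀ n, P {ω | √(d n) ≤ |Y (n + 1) ω|} ≤ ENNReal.ofReal ((1 / 4) ^ n) := by
      intro n
      have h1 := meas_ge_le_variance_div_sq (hL2 (n + 1)) (Real.sqrt_pos.2 (hdpos n))
      rw [hY0, hvar, Real.sq_sqrt (hdpos n).le] at h1
      simp only [sub_zero] at h1
      refine h1.trans (ENNReal.ofReal_le_ofReal ?_)
      rw [div_le_iff₀ (hdpos n)]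
      have h2 := hdec n
      have h3 := mul_le_mul_of_nonneg_left (hdu n) (by positivity : (0 : ℝ) ≤ (1 / 4) ^ n)
      have h4 : (0 : ℝ) ≤ (1 / 4) ^ n * u n := mul_nonneg (by positivity) (hu n).le
      rw [pow_succ] at h2
      linarith
    refine ne_top_of_le_ne_top ?_ (ENNReal.tsum_le_tsum hb)
    exact (summable_geometric_of_lt_one (by norm_num) (by norm_num)).tsum_ofReal_ne_top
  rw [← compl_mem_ae_iff]
  filter_upwards [hBC1, hBC2] with ω h1 h2 h3
  obtain ⟨n, hn1, hn2⟩ := (h2.and_eventually h1).exists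
  have h4 := h3 n
  have h5 := le_abs_self (Y (n + 1) ω)
  simp only [hS, hD, Set.mem_preimage, Set.mem_Iic] at hn1
  simp only [not_le] at hn2
  linarith

/-- **Corollary 5 (Brownian sheet).**  Let `X = {X t : t ∈ [0,1] × [0,1]}` be a centered
Gaussian process on `(Ω, F, P)` with continuous sample paths on `T = [0,1] × [0,1]`
(every finite real linear combination `∑ i, c i • X (p i)` is centered Gaussian) and
covariance `E(X (t₁,t₂) · X (s₁,s₂)) = min s₁ t₁ * min s₂ t₂`, i.e. `X` is a Brownian
sheet.  Then for every continuous function `h` on `T` the half-region depth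
`D(h,P) = min( P(∀ t ∈ T, X t ≥ h t), P(∀ t ∈ T, X t ≤ h t) )` is zero. -/
theorem brownianSheet_halfRegionDepth_eq_zero
    {Ω : Type*} [MeasurableSpace Ω] (P : Measure Ω) [IsProbabilityMeasure P]
    (X : ℝ × ℝ → Ω → ℝ) (hXmeas : ∀ t, Measurable (X t))
    (hXpaths : ∀ ω, ContinuousOn (fun t => X t ω)
      (Set.Icc (0 : ℝ) 1 ×ˢ Set.Icc (0 : ℝ) 1))
    (hgauss : ∀ (n : ℕ) (c : Fin n → ℝ) (p : Fin n → ℝ × ℝ),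
      (∀ i, p i ∈ Set.Icc (0 : ℝ) 1 ×ˢ Set.Icc (0 : ℝ) 1) →
      ∃ v : ℝ≥0, P.map (fun ω => ∑ i, c i * X (p i) ω) = gaussianReal 0 v)
    (hcov : ∀ s t : ℝ × ℝ, s ∈ Set.Icc (0 : ℝ) 1 ×ˢ Set.Icc (0 : ℝ) 1 →
      t ∈ Set.Icc (0 : ℝ) 1 ×ˢ Set.Icc (0 : ℝ) 1 →
      ∫ ω, X s ω * X t ω ∂P = min s.1 t.1 * min s.2 t.2)
    (h : ℝ × ℝ → ℝ)
    (hh : ContinuousOn h (Set.Icc (0 : ℝ) 1 ×ˢ Set.Icc (0 : ℝ) 1)) :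
    min (P {ω | ∀ t ∈ Set.Icc (0 : ℝ) 1 ×ˢ Set.Icc (0 : ℝ) 1, h t ≤ X t ω})
      (P {ω | ∀ t ∈ Set.Icc (0 : ℝ) 1 ×ˢ Set.Icc (0 : ℝ) 1, X t ω ≤ h t}) = 0 := by
  -- Diagonal points whose squared coordinates decrease faster than geometrically; every
  -- subsequence of them still satisfies the decay required by the sampling lemma.
  set s : ℕ → ℝ := fun n => (1 / 2) ^ (n ^ 2) with hs
  have hspos : ∀ n, 0 < s n := fun n => by positivity
  have hsmem : ∀ n, (s n, s n) ∈ Set.Icc (0 : ℝ) 1 ×ˢ Set.Icc (0 : ℝ) 1 := by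
    intro n
    have h1 : s n ≤ 1 := pow_le_one₀ (by norm_num) (by norm_num)
    exact ⟨⟨(hspos n).le, h1⟩, ⟨(hspos n).le, h1⟩⟩
  have key : ∀ φ : ℕ → ℕ, StrictMono φ →
      P {ω | ∀ n, 0 ≤ X (s (φ n), s (φ n)) ω} = 0 ∧
      P {ω | ∀ n, 0 ≤ -X (s (φ n), s (φ n)) ω} = 0 := by
    intro φ hφ
    set Y : ℕ → Ω → ℝ := fun n => X (s (φ n), s (φ n)) with hY
    have hYm : ∀ n, Measurable (Y n) := fun n => hXmeas _
    have hYG : IsGaussianProcess Y P := isGaussianProcess_of_linearCombination hYm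
      fun n c p => hgauss n c (fun i => (s (φ (p i)), s (φ (p i)))) fun i => hsmem _
    have hY0 : ∀ n, ∫ ω, Y n ω ∂P = 0 := by
      intro n
      obtain ⟨v, hv⟩ := hgauss 1 (fun _ => 1) (fun _ => (s (φ n), s (φ n))) fun _ => hsmem _
      simp only [Finset.univ_unique, Finset.sum_const, Finset.card_singleton, one_smul,
        one_mul] at hv
      have h1 : ∫ x, x ∂(P.map (Y n)) = ∫ ω, Y n ω ∂P :=
        integral_map (hYm n).aemeasurable aestronglyMeasurable_id
      rw [← h1]
      simp only [hY]
      rw [hv, integral_id_gaussianReal]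
    have hu : ∀ n, 0 < s (φ n) ^ 2 := fun n => pow_pos (hspos _) 2
    have hdec : ∀ n, s (φ (n + 1)) ^ 2 ≤ s (φ n) ^ 2 * (1 / 4) ^ (n + 1) := by
      intro n
      have h1 : φ n + 1 ≤ φ (n + 1) := hφ (Nat.lt_succ_self n)
      have h2 : n ≤ φ n := hφ.le_apply
      have h3 : (1 / 4 : ℝ) = (1 / 2) ^ 2 := by norm_num
      simp only [hs]
      rw [h3, ← pow_mul, ← pow_mul, ← pow_mul, ← pow_add]
      exact pow_le_pow_of_le_one (by norm_num) (by norm_num) (by nlinarith)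
    have hcovY : ∀ i j, i ≤ j → ∫ ω, Y i ω * Y j ω ∂P = s (φ j) ^ 2 := by
      intro i j hij
      have h1 : s (φ j) ≤ s (φ i) := pow_le_pow_of_le_one (by norm_num) (by norm_num)
        (Nat.pow_le_pow_left (hφ.monotone hij) 2)
      rw [hcov _ _ (hsmem _) (hsmem _), min_eq_right h1]
      ring
    refine ⟨hYG.measure_forall_nonneg_eq_zero hYm hY0 hu hdec hcovY, ?_⟩
    have hneg : IsGaussianProcess (fun n ω => -Y n ω) P := by
      simpa using hYG.smul (fun _ => (-1 : ℝ))
    refine hneg.measure_forall_nonneg_eq_zero (fun n => (hYm n).neg) (fun n => ?_) hu hdec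
      fun i j hij => ?_
    · rw [integral_neg, hY0, neg_zero]
    · simpa using hcovY i j hij
  have hfreq : (∃ᶠ n in atTop, 0 ≤ h (s n, s n)) ∨ ∃ᶠ n in atTop, h (s n, s n) ≤ 0 :=
    frequently_or_distrib.1 (Frequently.of_forall fun n => le_total _ _)
  rcases hfreq with hf | hf
  · obtain ⟨φ, hφ, hφ0⟩ := extraction_of_frequently_atTop hf
    refine le_antisymm ((min_le_left _ _).trans ?_) zero_le
    rw [← (key φ hφ).1]
    exact measure_mono fun ω hω n => (hφ0 n).trans (hω _ (hsmem (φ n)))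
  · obtain ⟨φ, hφ, hφ0⟩ := extraction_of_frequently_atTop hf
    refine le_antisymm ((min_le_right _ _).trans ?_) zero_le
    rw [← (key φ hφ).2]
    exact measure_mono fun ω hω n => neg_nonneg.2 ((hω _ (hsmem (φ n))).trans (hφ0 n))
end

section
/- Let X = {X(t) : 0 ≤ t ≤ 1} be a stochastic process on (Ω,F,P) with cadlag sample paths on [0,1]. Suppose (1) X satisfies the Blumenthal zero-one law at t = 0, i.e., every event A in F₀⁺ := ∩_{t>0} F_t has P(A) = 0 or 1, where F_t is the σ-field generated by {X(s) : 0 ≤ s ≤ t}; and (2) for every t > 0 the random variable X(t) has a continuous distribution function. Then the half-region depth D(h,P) = min( P(X(t) ≥ h(t) for all t ∈ [0,1]), P(X(t) ≤ h(t) for all t ∈ [0,1]) ) equals 0 for every cadlag function h on [0,1]. -/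
/-!
Along a sequence `u n ↓ 0`, the event `{h (u n) ≤ X (u n) for all large n}` lies in `F₀⁺`, so
the zero-one law makes it null or almost sure, and likewise for the reversed inequality. If the
depth were positive, both events would have positive probability, hence probability one, and
almost surely `X (u n) = h (u n)` for some `n`. That is a countable union of events which are
null, because a continuous distribution function has no atoms.
-/

open MeasureTheory ProbabilityTheory Filter
open scoped ENNReal

/-- A real function is cadlag on `[0,1]`: it is right-continuous at every point of
`[0,1)` and has left limits at every point of `(0,1]`. -/
def IsCadlagOnUnit (f : ℝ → ℝ) : Prop :=
  (∀ t ∈ Set.Ico (0 : ℝ) 1, ContinuousWithinAt f (Set.Ici t) t) ∧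
  (∀ t ∈ Set.Ioc (0 : ℝ) 1, ∃ l : ℝ, Tendsto f (nhdsWithin t (Set.Iio t)) (nhds l))

/-- The natural filtration `F_t` of a process `X`: the σ-field generated by
`{X s : 0 ≤ s ≤ t}`. -/
def natFiltration {Ω : Type*} (X : ℝ → Ω → ℝ) (t : ℝ) : MeasurableSpace Ω :=
  ⨆ s ∈ Set.Icc (0 : ℝ) t, MeasurableSpace.comap (X s) (inferInstance : MeasurableSpace ℝ)

/-- Tail events of `X` along a positive sequence tending to `0` belong to
the germ σ-field `F₀⁺`. -/
lemma measurableSet_germ_eventually {Ω : Type*} (X : ℝ → Ω → ℝ) (u : ℕ → ℝ)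
    (hu : ∀ n, 0 < u n) (hu0 : Tendsto u atTop (nhds 0)) (S : ℕ → Set ℝ)
    (hS : ∀ n, MeasurableSet (S n)) :
    MeasurableSet[⨅ t > (0 : ℝ), natFiltration X t] {ω | ∀ᶠ n in atTop, X (u n) ω ∈ S n} := by
  simp only [MeasurableSpace.measurableSet_iInf]
  intro t ht
  obtain ⟨N, hN⟩ := eventually_atTop.1 (hu0.eventually_lt_const ht)
  -- Discarding the indices below `N` leaves only times in `[0, t]`.
  have hset : {ω | ∀ᶠ n in atTop, X (u n) ω ∈ S n} =
      ⋃ m : ℕ, ⋂ k : ℕ, X (u (N + m + k)) ⁻¹' S (N + m + k) := by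
    ext ω
    simp only [Set.mem_ofPred_eq, Set.mem_iUnion, Set.mem_iInter, Set.mem_preimage,
      eventually_atTop]
    constructor
    · rintro ⟨m, hm⟩
      exact ⟨m, fun k => hm _ (by omega)⟩
    · rintro ⟨m, hm⟩
      refine ⟨N + m, fun b hb => ?_⟩
      obtain ⟨k, rfl⟩ := Nat.exists_eq_add_of_le hb
      exact hm k
  rw [hset]
  refine MeasurableSet.iUnion fun m => MeasurableSet.iInter fun k => ?_
  have hle : MeasurableSpace.comap (X (u (N + m + k))) (inferInstance : MeasurableSpace ℝ) ≤
      natFiltration X t :=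
    le_iSup₂_of_le (f := fun s (_ : s ∈ Set.Icc (0 : ℝ) t) =>
      MeasurableSpace.comap (X s) (inferInstance : MeasurableSpace ℝ))
      (u (N + m + k)) ⟨(hu _).le, (hN _ (by omega)).le⟩ le_rfl
  exact hle _ ⟨_, hS _, rfl⟩

lemma measure_eq_zero_of_continuous_cdf {Ω : Type*} [MeasurableSpace Ω] (P : Measure Ω)
    [IsProbabilityMeasure P] (Y : Ω → ℝ) (hY : Measurable Y)
    (hc : Continuous fun x : ℝ => (P {ω | Y ω ≤ x}).toReal) (x : ℝ) :
    P {ω | Y ω = x} = 0 := by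
  have hlim : Tendsto (fun y => (P {ω | Y ω ≤ x}).toReal - (P {ω | Y ω ≤ y}).toReal)
      (nhdsWithin x (Set.Iio x)) (nhds 0) := by
    have := (tendsto_const_nhds (x := (P {ω | Y ω ≤ x}).toReal)).sub
      ((hc.tendsto x).mono_left (nhdsWithin_le_nhds (s := Set.Iio x)))
    simpa using this
  have hle : (P {ω | Y ω = x}).toReal ≤ 0 := by
    refine ge_of_tendsto hlim ?_
    filter_upwards [self_mem_nhdsWithin] with y hy
    have hy' : y < x := hy
    have hdisj : Disjoint {ω | Y ω = x} {ω | Y ω ≤ y} := by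
      rw [Set.disjoint_left]
      intro ω h1 h2
      simp only [Set.mem_ofPred_eq] at h1 h2
      linarith
    have hsub : {ω | Y ω = x} ∪ {ω | Y ω ≤ y} ⊆ {ω | Y ω ≤ x} := by
      rintro ω (h1 | h1) <;> simp only [Set.mem_ofPred_eq] at h1 ⊢ <;> linarith
    have hmono := measureReal_mono (μ := P) hsub
    rw [measureReal_union hdisj (measurableSet_le hY measurable_const)] at hmono
    simp only [measureReal_def] at hmono
    linarith
  exact ((ENNReal.toReal_eq_zero_iff _).1 (le_antisymm hle ENNReal.toReal_nonneg)).resolve_right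
    (measure_ne_top _ _)

/-- **Proposition 3 (Blumenthal zero-one law processes).**  Let `X = {X t : 0 ≤ t ≤ 1}`
be a stochastic process on `(Ω, F, P)` with cadlag sample paths on `[0,1]` such that
(1) `X` satisfies the Blumenthal zero-one law at `t = 0`, i.e. every
`A ∈ F₀⁺ = ∩_{t>0} F_t` has `P A = 0` or `P A = 1`, where `F_t` is the σ-field generated
by `{X s : 0 ≤ s ≤ t}`; and (2) for every `t > 0` the random variable `X t` has a
continuous distribution function.  Then the half-region depth
`D(h,P) = min( P(∀ t ∈ [0,1], X t ≥ h t), P(∀ t ∈ [0,1], X t ≤ h t) )` is zero for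
every cadlag function `h` on `[0,1]`. -/
theorem halfRegionDepth_eq_zero_of_blumenthal
    {Ω : Type*} [MeasurableSpace Ω] (P : Measure Ω) [IsProbabilityMeasure P]
    (X : ℝ → Ω → ℝ) (hXmeas : ∀ t, Measurable (X t))
    (hXpaths : ∀ ω, IsCadlagOnUnit fun t => X t ω)
    (hblumenthal : ∀ A : Set Ω,
      MeasurableSet[⨅ t > (0 : ℝ), natFiltration X t] A → P A = 0 ∨ P A = 1)
    (hcont : ∀ t : ℝ, 0 < t → Continuous fun x : ℝ => (P {ω | X t ω ≤ x}).toReal)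
    (h : ℝ → ℝ) (hh : IsCadlagOnUnit h) :
    min (P {ω | ∀ t ∈ Set.Icc (0 : ℝ) 1, h t ≤ X t ω})
      (P {ω | ∀ t ∈ Set.Icc (0 : ℝ) 1, X t ω ≤ h t}) = 0 := by
  by_contra hne
  obtain ⟨hA0, hB0⟩ : _ ∧ _ := lt_min_iff.1 (pos_iff_ne_zero.2 hne)
  let u : ℕ → ℝ := fun n => 1 / ((n : ℝ) + 1)
  have hu : ∀ n, 0 < u n := fun n => by positivity
  have hu0 : Tendsto u atTop (nhds 0) := tendsto_one_div_add_atTop_nhds_zero_nat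
  have huI : ∀ n, u n ∈ Set.Icc (0 : ℝ) 1 := fun n =>
    ⟨(hu n).le, (div_le_one (by positivity)).2 (by linarith [n.cast_nonneg (α := ℝ)])⟩
  have hA := (hblumenthal _ (measurableSet_germ_eventually X u hu hu0
    (fun n => Set.Ici (h (u n))) fun _ => measurableSet_Ici)).resolve_left
    (hA0.trans_le (measure_mono fun ω hω => Eventually.of_forall fun n => hω _ (huI n))).ne'
  have hB := (hblumenthal _ (measurableSet_germ_eventually X u hu hu0
    (fun n => Set.Iic (h (u n))) fun _ => measurableSet_Iic)).resolve_left
    (hB0.trans_le (measure_mono fun ω hω => Eventually.of_forall fun n => hω _ (huI n))).ne'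
  have hms : ∀ S : ℕ → Set ℝ, (∀ n, MeasurableSet (S n)) →
      MeasurableSet {ω | ∀ᶠ n in atTop, X (u n) ω ∈ S n} := by
    intro S hS
    have hle : (⨅ t > (0 : ℝ), natFiltration X t) ≤ (inferInstance : MeasurableSpace Ω) :=
      (iInf₂_le (1 : ℝ) one_pos).trans (iSup₂_le fun s _ => (hXmeas s).comap_le)
    exact hle _ (measurableSet_germ_eventually X u hu hu0 S hS)
  have hA' := (mem_ae_iff_prob_eq_one (hms _ fun _ => measurableSet_Ici)).2 hA
  have hB' := (mem_ae_iff_prob_eq_one (hms _ fun _ => measurableSet_Iic)).2 hB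
  have hnull : ∀ᵐ ω ∂P, ∀ n, X (u n) ω ≠ h (u n) := by
    refine ae_all_iff.2 fun n => ?_
    simpa [ae_iff] using
      measure_eq_zero_of_continuous_cdf P (X (u n)) (hXmeas _) (hcont _ (hu n)) (h (u n))
  have hfalse : ∀ᵐ _ω ∂P, False := by
    filter_upwards [hA', hB', hnull] with ω h1 h2 h3
    obtain ⟨n, hn1, hn2⟩ := (h1.and h2).exists
    exact h3 n (le_antisymm hn2 hn1)
  exact hfalse.exists.elim fun _ hf => hf
end

section
/- Let X(t) = Y(t) + Z, t ∈ T, where Y has all sample paths in M(T) and Z is a real random variable independent of Y with a density f_Z on ℝ that is absolutely continuous with derivative f_Z′ ∈ L¹(ℝ). For h ∈ M(T) set W_h = inf_{t∈T}(X(t) − h(t)). Then for all h₁, h₂ ∈ M(T) with ‖h₁ − h₂‖_∞ ≤ δ and every x ∈ ℝ, |P(W_{h₁} ≥ x) − P(W_{h₂} ≥ x)| ≤ 2δ ∫_ℝ |f_Z′(u)| du. -/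
/-!
Write `A_h = inf_t (Y t - h t)`, so that `W_h = A_h + Z` with `A_h` a measurable function of `Y`
(the infimum may be taken over the countable set `T₀`), hence independent of `Z`.

Let `C = ∫ |fZ'|`. The density satisfies `fZ ≤ C` everywhere: its positive part is integrable, so
it is arbitrarily small at points arbitrarily far to the left, and from such a point `fZ` can
increase by at most `C`. Hence `Z` gives mass at most `C δ` to every interval of length `δ`
(`map_Ico_le_of_density`).

If `‖h₁ - h₂‖_∞ ≤ δ`, then `A_{h₁} ≤ A_{h₂} + δ`, so `W_{h₁} ≥ x > W_{h₂}` forces `Z` into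
`[x - A_{h₁}, x - A_{h₁} + δ)`. By independence and Fubini this event has probability at most `C δ`
(`prob_sub_le_of_indepFun`). Exchanging `h₁` and `h₂` bounds the absolute value, even without the
factor `2`.
-/

open MeasureTheory intervalIntegral
open scoped ENNReal

/-- The sup-norm `‖f‖_∞ = sup_{t ∈ T} |f t|` of a real-valued function on `T`. -/
noncomputable def supNormFn {T : Type*} (f : T → ℝ) : ℝ :=
  sSup (Set.range fun t => |f t|)

/-- For a process `X` with paths in `M(T)` and `h ∈ M(T)`,
`W_h(ω) = inf_{t ∈ T} (X t ω - h t)`. -/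
noncomputable def Wproc {T Ω : Type*} (X : Ω → T → ℝ) (h : T → ℝ) (ω : Ω) : ℝ :=
  sInf (Set.range fun t => X ω t - h t)

/-- If `ofReal ∘ f` is integrable, `f` is at most the total variation `∫ |f'|`. No sign condition
on `f` is needed. -/
lemma density_le_integral_abs_deriv {f f' : ℝ → ℝ}
    (hfin : ∫⁻ u, ENNReal.ofReal (f u) ≠ ⊤) (hL1 : Integrable f' volume)
    (hac : ∀ a b : ℝ, a < b → f b - f a = ∫ u in a..b, f' u) (b : ℝ) :
    f b ≤ ∫ u, |f' u| := by
  refine le_of_forall_pos_le_add fun ε hε => ?_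
  obtain ⟨a, hab, ha⟩ : ∃ a < b, f a < ε := by
    by_contra! hcon
    apply hfin
    rw [eq_top_iff]
    calc (⊤ : ℝ≥0∞) = ∫⁻ _ in Set.Iio b, ENNReal.ofReal ε := by
          rw [setLIntegral_const, Real.volume_Iio, ENNReal.mul_top]
          simpa using hε
      _ ≤ ∫⁻ u in Set.Iio b, ENNReal.ofReal (f u) :=
          setLIntegral_mono' measurableSet_Iio fun u hu => ENNReal.ofReal_le_ofReal (hcon u hu)
      _ ≤ ∫⁻ u, ENNReal.ofReal (f u) := setLIntegral_le_lintegral _ _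
  have h1 : ∫ u in a..b, f' u ≤ ∫ u, |f' u| := by
    rw [intervalIntegral.integral_of_le hab.le]
    calc ∫ u in Set.Ioc a b, f' u ≤ ∫ u in Set.Ioc a b, |f' u| :=
          integral_mono hL1.integrableOn hL1.abs.integrableOn fun u => le_abs_self _
      _ ≤ ∫ u, |f' u| :=
          setIntegral_le_integral hL1.abs (Filter.Eventually.of_forall fun u => abs_nonneg _)
  linarith [hac a b hab]

lemma map_Ico_le_of_density {μ : Measure ℝ} [IsProbabilityMeasure μ] {f f' : ℝ → ℝ}
    (hdens : μ = volume.withDensity fun x => ENNReal.ofReal (f x))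
    (hL1 : Integrable f' volume)
    (hac : ∀ a b : ℝ, a < b → f b - f a = ∫ u in a..b, f' u) (s δ : ℝ) :
    μ (Set.Ico s (s + δ)) ≤ ENNReal.ofReal (∫ u, |f' u|) * ENNReal.ofReal δ := by
  have hfin : ∫⁻ u, ENNReal.ofReal (f u) ≠ ⊤ := by
    have h := measure_ne_top μ Set.univ
    rwa [hdens, withDensity_apply _ MeasurableSet.univ, Measure.restrict_univ] at h
  rw [hdens, withDensity_apply _ measurableSet_Ico]
  calc ∫⁻ u in Set.Ico s (s + δ), ENNReal.ofReal (f u)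
      ≤ ∫⁻ _ in Set.Ico s (s + δ), ENNReal.ofReal (∫ u, |f' u|) :=
        lintegral_mono fun u =>
          ENNReal.ofReal_le_ofReal (density_le_integral_abs_deriv hfin hL1 hac u)
    _ = _ := by rw [setLIntegral_const, Real.volume_Ico, add_sub_cancel_left]

/-- One-sided comparison of the tails of `A + Z` and `B + Z`. Only `A` has to be independent of
`Z`, and `B` need not be measurable. -/
lemma prob_sub_le_of_indepFun {Ω : Type*} [MeasurableSpace Ω] {P : Measure Ω}
    [IsProbabilityMeasure P] {A B Z : Ω → ℝ} (hA : Measurable A) (hZ : Measurable Z)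
    (hind : ProbabilityTheory.IndepFun A Z P) {δ : ℝ} (hAB : ∀ ω, A ω ≤ B ω + δ)
    {C : ℝ≥0∞} (hC : ∀ s, P.map Z (Set.Ico s (s + δ)) ≤ C) (x : ℝ) :
    P {ω | x ≤ A ω + Z ω} ≤ P {ω | x ≤ B ω + Z ω} + C := by
  set S : Set (ℝ × ℝ) := {p | x - p.1 ≤ p.2 ∧ p.2 < x - p.1 + δ} with hS
  have hSm : MeasurableSet S := by
    rw [hS, Set.ofPred_and]
    apply MeasurableSet.inter
    · exact measurableSet_le (measurable_const.sub measurable_fst) measurable_snd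
    · exact measurableSet_lt measurable_snd
        ((measurable_const.sub measurable_fst).add measurable_const)
  have := Measure.isProbabilityMeasure_map (μ := P) hA.aemeasurable
  have := Measure.isProbabilityMeasure_map (μ := P) hZ.aemeasurable
  have hprod := (ProbabilityTheory.indepFun_iff_map_prod_eq_prod_map_map
    hA.aemeasurable hZ.aemeasurable).1 hind
  have hPS : P ((fun ω => (A ω, Z ω)) ⁻¹' S) ≤ C := by
    rw [← Measure.map_apply (hA.prodMk hZ) hSm, hprod, Measure.prod_apply hSm]
    calc ∫⁻ a, P.map Z (Prod.mk a ⁻¹' S) ∂(P.map A) ≤ ∫⁻ _, C ∂(P.map A) :=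
          lintegral_mono fun a => hC (x - a)
      _ = C := by simp
  calc P {ω | x ≤ A ω + Z ω}
      ≤ P ({ω | x ≤ B ω + Z ω} ∪ (fun ω => (A ω, Z ω)) ⁻¹' S) := by
        refine measure_mono fun ω (hω : x ≤ A ω + Z ω) => ?_
        by_cases h : x ≤ B ω + Z ω
        · exact Or.inl h
        · refine Or.inr ⟨?_, ?_⟩
          · change x - A ω ≤ Z ω
            linarith
          · change Z ω < x - A ω + δ
            linarith [hAB ω]
    _ ≤ _ := (measure_union_le _ _).trans (by gcongr)

lemma bddBelow_range_of_mem {T : Type*} {T₀ : Set T} {M : Submodule ℝ (T → ℝ)}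
    (hsupM : ∀ f ∈ M, BddAbove (Set.range f) ∧ sSup (Set.range f) = sSup (f '' T₀))
    {f : T → ℝ} (hf : f ∈ M) : BddBelow (Set.range f) := by
  obtain ⟨c, hc⟩ := (hsupM (-f) (M.neg_mem hf)).1
  refine ⟨-c, ?_⟩
  rintro _ ⟨t, rfl⟩
  have := hc ⟨t, rfl⟩
  simp only [Pi.neg_apply] at this
  linarith

lemma Wproc_add {T Ω : Type*} [Nonempty T] {Y : Ω → T → ℝ} {h : T → ℝ} {ω : Ω}
    (hb : BddBelow (Set.range (Y ω - h))) (Z : Ω → ℝ) :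
    Wproc (fun ω t => Y ω t + Z ω) h ω = Wproc Y h ω + Z ω := by
  have := ciInf_add hb (Z ω)
  simp only [Pi.sub_apply] at this
  change (⨅ t, (Y ω t + Z ω - h t)) = (⨅ t, (Y ω t - h t)) + Z ω
  rw [this]
  exact iInf_congr fun t => by ring

/-- `W_h` is a measurable function of the path, because the infimum over `T` agrees with the one
over the countable set `T₀`. -/
lemma Wproc_eq_comp {T Ω : Type*} {T₀ : Set T} {M : Submodule ℝ (T → ℝ)}
    (hsupM : ∀ f ∈ M, BddAbove (Set.range f) ∧ sSup (Set.range f) = sSup (f '' T₀))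
    {Y : Ω → T → ℝ} (hY : ∀ ω, Y ω ∈ M) {h : T → ℝ} (hh : h ∈ M) :
    Wproc Y h = (fun y : T → ℝ => -⨆ t : T₀, (h t - y t)) ∘ Y := by
  funext ω
  have h1 := (hsupM (h - Y ω) (M.sub_mem hh (hY ω))).2
  have h2 : -(Set.range fun t => Y ω t - h t) = Set.range (h - Y ω) := by
    ext r
    simp only [Set.mem_neg, Set.mem_range, Pi.sub_apply]
    exact exists_congr fun t => ⟨fun e => by linarith, fun e => by linarith⟩
  simp only [Wproc, Function.comp_apply]
  rw [Real.sInf_def, h2, h1, sSup_image']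
  rfl

lemma Wproc_le_add {T Ω : Type*} [Nonempty T] {Y : Ω → T → ℝ} {h₁ h₂ : T → ℝ} {ω : Ω} {δ : ℝ}
    (hb : BddBelow (Set.range (Y ω - h₁))) (hd : ∀ t, |h₁ t - h₂ t| ≤ δ) :
    Wproc Y h₁ ω ≤ Wproc Y h₂ ω + δ := by
  rw [← sub_le_iff_le_add]
  refine le_ciInf (f := fun t => Y ω t - h₂ t) fun t => ?_
  have h1 : Wproc Y h₁ ω ≤ Y ω t - h₁ t := ciInf_le hb t
  linarith [(abs_le.1 (hd t)).1]

/-- **Lemma 2, inequality (2.15).**  Let `X t = Y t + Z`, `t ∈ T`, where `Y` has all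
sample paths in `M(T)` and `Z` is independent of `Y` with density `f_Z` on `ℝ` which is
absolutely continuous with derivative `f_Z' ∈ L¹(ℝ)`.  For `h ∈ M(T)` set
`W_h = inf_{t∈T} (X t - h t)`.  Then for all `h₁, h₂ ∈ M(T)` with `‖h₁ - h₂‖_∞ ≤ δ` and
every `x ∈ ℝ`,
`|P(W_{h₁} ≥ x) - P(W_{h₂} ≥ x)| ≤ 2 δ ∫ |f_Z'(u)| du`. -/
theorem Wproc_prob_diff_le_density_bound
    {T Ω : Type*} [MeasurableSpace Ω] (P : Measure Ω) [IsProbabilityMeasure P]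
    (T₀ : Set T) (hT₀ : T₀.Countable)
    (M : Submodule ℝ (T → ℝ))
    (hconst : ∀ c : ℝ, (fun _ : T => c) ∈ M)
    (hsupM : ∀ f ∈ M, BddAbove (Set.range f) ∧ sSup (Set.range f) = sSup (f '' T₀))
    (Y : Ω → T → ℝ) (hYpaths : ∀ ω, Y ω ∈ M) (hYmeas : Measurable Y)
    (Z : Ω → ℝ) (hZmeas : Measurable Z)
    (hindep : ProbabilityTheory.IndepFun Y Z P)
    (fZ fZ' : ℝ → ℝ)
    (hdens : P.map Z = volume.withDensity fun x => ENNReal.ofReal (fZ x))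
    (hL1 : Integrable fZ' volume)
    (hac : ∀ a b : ℝ, a < b → fZ b - fZ a = ∫ u in a..b, fZ' u)
    (h₁ : T → ℝ) (hh₁ : h₁ ∈ M) (h₂ : T → ℝ) (hh₂ : h₂ ∈ M)
    (δ : ℝ) (hδ : supNormFn (fun t => h₁ t - h₂ t) ≤ δ) (x : ℝ) :
    |(P {ω | x ≤ Wproc (fun ω t => Y ω t + Z ω) h₁ ω}).toReal -
        (P {ω | x ≤ Wproc (fun ω t => Y ω t + Z ω) h₂ ω}).toReal| ≤
      2 * δ * ∫ u, |fZ' u| := by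
  have hC0 : 0 ≤ ∫ u, |fZ' u| := integral_nonneg fun u => abs_nonneg _
  have hδ0 : 0 ≤ δ := by
    refine le_trans (Real.sSup_nonneg ?_) hδ
    rintro _ ⟨t, rfl⟩
    exact abs_nonneg _
  have hCδ := mul_nonneg hC0 hδ0
  -- On an empty index set both infima take the junk value `0`.
  rcases isEmpty_or_nonempty T with hT | hT
  · have : h₁ = h₂ := Subsingleton.elim _ _
    subst this
    rw [sub_self, abs_zero]
    linarith
  have := Measure.isProbabilityMeasure_map (μ := P) hZmeas.aemeasurable
  have : Countable T₀ := hT₀.to_subtype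
  have key : ∀ k₁ ∈ M, ∀ k₂ ∈ M, (∀ t, |k₁ t - k₂ t| ≤ δ) →
      (P {ω | x ≤ Wproc (fun ω t => Y ω t + Z ω) k₁ ω}).toReal ≤
        (P {ω | x ≤ Wproc (fun ω t => Y ω t + Z ω) k₂ ω}).toReal + (∫ u, |fZ' u|) * δ := by
    intro k₁ hk₁ k₂ hk₂ hd
    have hb : ∀ k ∈ M, ∀ ω, BddBelow (Set.range (Y ω - k)) := fun k hk ω =>
      bddBelow_range_of_mem hsupM (M.sub_mem (hYpaths ω) hk)
    have hg : Measurable fun y : T → ℝ => -⨆ t : T₀, (k₁ t - y t) :=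
      (Measurable.iSup fun t => by fun_prop).neg
    have hW := Wproc_eq_comp hsupM hYpaths hk₁
    have hA : Measurable (Wproc Y k₁) := hW ▸ hg.comp hYmeas
    have hind : ProbabilityTheory.IndepFun (Wproc Y k₁) Z P :=
      hW ▸ hindep.comp hg measurable_id
    simp only [Wproc_add (hb k₁ hk₁ _), Wproc_add (hb k₂ hk₂ _)]
    have h := prob_sub_le_of_indepFun hA hZmeas hind
      (fun ω => Wproc_le_add (hb k₁ hk₁ ω) hd)
      (fun s => map_Ico_le_of_density hdens hL1 hac s δ) x
    rw [← ENNReal.ofReal_mul hC0] at h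
    have h' := ENNReal.toReal_mono
      (ENNReal.add_ne_top.2 ⟨measure_ne_top _ _, ENNReal.ofReal_ne_top⟩) h
    rwa [ENNReal.toReal_add (measure_ne_top _ _) ENNReal.ofReal_ne_top,
      ENNReal.toReal_ofReal hCδ] at h'
  have hd : ∀ t, |h₁ t - h₂ t| ≤ δ := by
    have hdM := M.sub_mem hh₁ hh₂
    obtain ⟨u, hu⟩ := (hsupM _ hdM).1
    obtain ⟨l, hl⟩ := bddBelow_range_of_mem hsupM hdM
    have hbdd : BddAbove (Set.range fun t => |h₁ t - h₂ t|) := by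
      refine ⟨max |l| |u|, ?_⟩
      rintro _ ⟨t, rfl⟩
      exact abs_le_max_abs_abs (hl ⟨t, rfl⟩) (hu ⟨t, rfl⟩)
    exact fun t => (le_csSup hbdd ⟨t, rfl⟩).trans hδ
  have k12 := key h₁ hh₁ h₂ hh₂ hd
  have k21 := key h₂ hh₂ h₁ hh₁ fun t => by rw [abs_sub_comm]; exact hd t
  rw [abs_le]
  constructor <;> nlinarith
end

section
/- Let X = {X(t) : t ∈ T} be a stochastic process with all sample paths in M(T). Then for every r > 0, sup over all h ∈ M(T) with ‖h‖_∞ ≥ r of the half-region depth D(h) satisfies sup_{‖h‖_∞ ≥ r} D(h) ≤ P(‖X‖_∞ ≥ r); consequently lim_{r→∞} sup_{h : ‖h‖_∞ ≥ r} D(h) = 0. -/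
/-!
For a bounded `f`, `‖f‖_∞ = max (sup f) (sup (-f))`. Hence if `r ≤ ‖h‖_∞`, either `r ≤ sup h`, and
every path `X ⪰ h` has `r ≤ sup X ≤ ‖X‖_∞`, or `r ≤ sup (-h)`, and every path `X ⪯ h` has
`r ≤ sup (-X) ≤ ‖X‖_∞`. In both cases one of the two probabilities in `D(h)` is at most
`P(‖X‖_∞ ≥ r)`. No measurability enters in this part.

For the limit, separability (the suprema over `T` and over the countable `T₀` agree on `M`) makes
`‖X‖_∞` a measurable real-valued function, so the events `{‖X‖_∞ ≥ r}` decrease to `∅` as `r → ∞`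
and their probabilities tend to `0` by continuity from above.
-/

open MeasureTheory Filter
open scoped ENNReal

lemma supNormFn_eq_max {T : Type*} [Nonempty T] {f : T → ℝ}
    (h₁ : BddAbove (Set.range f)) (h₂ : BddAbove (Set.range (-f))) :
    supNormFn f = max (sSup (Set.range f)) (sSup (Set.range (-f))) := by
  have hle : ∀ t, |f t| ≤ max (sSup (Set.range f)) (sSup (Set.range (-f))) := fun t =>
    max_le_max (le_csSup h₁ ⟨t, rfl⟩) (le_csSup h₂ ⟨t, rfl⟩)
  have hb : BddAbove (Set.range fun t => |f t|) := ⟨_, by rintro _ ⟨t, rfl⟩; exact hle t⟩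
  refine le_antisymm (csSup_le (Set.range_nonempty _) ?_) (max_le ?_ ?_)
  · rintro _ ⟨t, rfl⟩
    exact hle t
  · refine csSup_le (Set.range_nonempty _) ?_
    rintro _ ⟨t, rfl⟩
    exact (le_abs_self (f t)).trans (le_csSup hb ⟨t, rfl⟩)
  · refine csSup_le (Set.range_nonempty _) ?_
    rintro _ ⟨t, rfl⟩
    exact (neg_le_abs (f t)).trans (le_csSup hb ⟨t, rfl⟩)

/-- On an empty index set the norm is `sSup ∅`, which is `0` by convention; so no `h` satisfies
`‖h‖_∞ ≥ r > 0` in that degenerate case. -/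
lemma supNormFn_of_isEmpty {T : Type*} [IsEmpty T] (f : T → ℝ) : supNormFn f = 0 := by
  simp [supNormFn, Set.range_eq_empty]

/-- **Bound (3.7)/(3.8).**  Let `X` be a stochastic process with all sample paths in
`M(T)`.  Then for every `r > 0`,
`sup_{h ∈ M(T), ‖h‖_∞ ≥ r} D(h) ≤ P(‖X‖_∞ ≥ r)`, where
`D(h) = min( P(X ⪰ h), P(X ⪯ h) )`; consequently
`lim_{r→∞} sup_{h : ‖h‖_∞ ≥ r} D(h) = 0`. -/
theorem halfRegionDepth_sup_large_norm
    {T Ω : Type*} [MeasurableSpace Ω] (P : Measure Ω) [IsProbabilityMeasure P]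
    (T₀ : Set T) (hT₀ : T₀.Countable)
    (M : Submodule ℝ (T → ℝ))
    (hconst : ∀ c : ℝ, (fun _ : T => c) ∈ M)
    (hsupM : ∀ f ∈ M, BddAbove (Set.range f) ∧ sSup (Set.range f) = sSup (f '' T₀))
    (X : Ω → T → ℝ) (hXpaths : ∀ ω, X ω ∈ M) (hXmeas : Measurable X) :
    (∀ r : ℝ, 0 < r →
      (⨆ (h : T → ℝ) (_ : h ∈ M) (_ : r ≤ supNormFn h),
          min (P {ω | ∀ t, h t ≤ X ω t}) (P {ω | ∀ t, X ω t ≤ h t})) ≤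
        P {ω | r ≤ supNormFn (X ω)}) ∧
    Tendsto
      (fun r : ℝ =>
        ⨆ (h : T → ℝ) (_ : h ∈ M) (_ : r ≤ supNormFn h),
          min (P {ω | ∀ t, h t ≤ X ω t}) (P {ω | ∀ t, X ω t ≤ h t}))
      atTop (nhds 0) := by
  have hmax : ∀ [Nonempty T], ∀ f ∈ M,
      supNormFn f = max (sSup (Set.range f)) (sSup (Set.range (-f))) := fun f hf =>
    supNormFn_eq_max (hsupM f hf).1 (hsupM (-f) (M.neg_mem hf)).1
  have hbound : ∀ r : ℝ, 0 < r →
      (⨆ (h : T → ℝ) (_ : h ∈ M) (_ : r ≤ supNormFn h),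
          min (P {ω | ∀ t, h t ≤ X ω t}) (P {ω | ∀ t, X ω t ≤ h t})) ≤
        P {ω | r ≤ supNormFn (X ω)} := by
    intro r hr
    refine iSup_le fun h => iSup_le fun hM => iSup_le fun hrh => ?_
    rcases isEmpty_or_nonempty T with hT | hT
    · rw [supNormFn_of_isEmpty] at hrh
      exact absurd hrh hr.not_ge
    rw [hmax h hM] at hrh
    rcases le_max_iff.1 hrh with hrh | hrh
    · refine (min_le_left _ _).trans (measure_mono fun ω hω => ?_)
      change r ≤ supNormFn (X ω)
      rw [hmax _ (hXpaths ω)]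
      exact le_max_of_le_left (hrh.trans (ciSup_mono (hsupM _ (hXpaths ω)).1 hω))
    · refine (min_le_right _ _).trans (measure_mono fun ω hω => ?_)
      change r ≤ supNormFn (X ω)
      rw [hmax _ (hXpaths ω)]
      exact le_max_of_le_right (hrh.trans
        (ciSup_mono (hsupM _ (M.neg_mem (hXpaths ω))).1 fun t => neg_le_neg (hω t)))
  refine ⟨hbound, ?_⟩
  have hmeas : Measurable fun ω => supNormFn (X ω) := by
    rcases isEmpty_or_nonempty T with hT | hT
    · simp only [supNormFn_of_isEmpty]
      exact measurable_const
    have : Countable T₀ := hT₀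
    have heq : (fun ω => supNormFn (X ω)) =
        fun ω => max (⨆ t : T₀, X ω t) (⨆ t : T₀, -X ω t) := by
      funext ω
      rw [hmax _ (hXpaths ω), (hsupM _ (hXpaths ω)).2, (hsupM _ (M.neg_mem (hXpaths ω))).2,
        sSup_image', sSup_image']
      rfl
    rw [heq]
    have hX : ∀ t, Measurable fun ω => X ω t := measurable_pi_iff.1 hXmeas
    exact (Measurable.iSup fun t : T₀ => hX t).max (Measurable.iSup fun t : T₀ => (hX t).neg)
  have hlim : Tendsto (fun r : ℝ => P {ω | r ≤ supNormFn (X ω)}) atTop (nhds 0) := by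
    have hInter : ⋂ r : ℝ, {ω | r ≤ supNormFn (X ω)} = ∅ :=
      Set.eq_empty_of_forall_notMem fun ω hω => by
        have := Set.mem_iInter.1 hω (supNormFn (X ω) + 1)
        exact absurd (show supNormFn (X ω) + 1 ≤ supNormFn (X ω) from this) (by linarith)
    have := tendsto_measure_iInter_atTop (μ := P) (s := fun r : ℝ => {ω | r ≤ supNormFn (X ω)})
      (fun r => (measurableSet_le measurable_const hmeas).nullMeasurableSet)
      (fun a b hab ω hω => le_trans hab hω) ⟨0, measure_ne_top _ _⟩
    rwa [hInter, measure_empty] at this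
  refine tendsto_of_tendsto_of_tendsto_of_le_of_le' tendsto_const_nhds hlim
    (Eventually.of_forall fun _ => zero_le) ?_
  filter_upwards [eventually_gt_atTop 0] with r hr using hbound r hr
end
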